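/- Let A ∈ ℝ^{n×n} be symmetric with nonnegative entries, L = diag(A·1) − A, and let H ∈ {0,1}^{n×k} be a partition indicator matrix with group map g (g(i) = the group of node i). Then L H = H L^π (where L^π = H† L H) if and only if for every pair of distinct groups r ≠ s, all nodes i in group r have the same total edge weight to group s, i.e. Σ_{j : g(j)=s} A_{ij} takes the same value for all i with g(i) = r. -/

import Mathlib

/-!
`L * H` has the form `H * X` exactly when its rows agree within each group, and if `G` is a left
inverse of `H` then `X` can only be `G * L * H`. Off the own group of `i`, the entries in row `i` of
`L * H` are the negated weights from `i` to the other groups. The rows of `L * H` sum to zero, so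
the remaining entry is the sum of these external weights and imposes no further condition.
-/

open Matrix BigOperators

section Indicator

variable {ι κ μ R : Type*} [DecidableEq κ] (g : ι → κ)

/-- The indicator matrix of the partition of `ι` into the fibres of the group map `g`. It is defined
for every `g`; all groups are nonempty when `g` is surjective. -/
def partitionIndicator (R : Type*) [Zero R] [One R] : Matrix ι κ R :=
  Matrix.of fun i s => if g i = s then 1 else 0

theorem partitionIndicator_apply [Zero R] [One R] (i : ι) (s : κ) :
    partitionIndicator g R i s = if g i = s then 1 else 0 :=
  rfl

theorem partitionIndicator_mul [NonAssocSemiring R] [Fintype κ] (X : Matrix κ μ R) :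
    partitionIndicator g R * X = X.submatrix g id := by
  ext i j
  simp [Matrix.mul_apply, partitionIndicator_apply]

theorem mul_partitionIndicator_apply [NonAssocSemiring R] [Fintype ι] (M : Matrix μ ι R)
    (i : μ) (s : κ) :
    (M * partitionIndicator g R) i s = ∑ j with g j = s, M i j := by
  simp [Matrix.mul_apply, partitionIndicator_apply, Finset.sum_filter]

theorem transpose_partitionIndicator_mul_self [NonAssocSemiring R] [Fintype ι] :
    (partitionIndicator g R)ᵀ * partitionIndicator g R
      = Matrix.diagonal fun r => ((Finset.univ.filter fun i => g i = r).card : R) := by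
  ext r s
  simp only [mul_partitionIndicator_apply, Matrix.diagonal_apply, Matrix.transpose_apply,
    partitionIndicator_apply]
  split_ifs with hrs
  · rw [hrs, Finset.sum_boole, Finset.filter_filter]
    simp only [and_self]
  · refine Finset.sum_eq_zero fun i hi => if_neg ?_
    rw [(Finset.mem_filter.mp hi).2]
    exact Ne.symm hrs

variable {g}

theorem pinv_partitionIndicator_mul_self [Field R] [CharZero R] [Fintype ι] [Fintype κ]
    (hg : Function.Surjective g) :
    ((partitionIndicator g R)ᵀ * partitionIndicator g R)⁻¹ * (partitionIndicator g R)ᵀ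
      * partitionIndicator g R = 1 := by
  have group_nonempty (r : κ) : (Finset.univ.filter fun i => g i = r).Nonempty := by
    simpa [Finset.filter_nonempty_iff] using hg r
  have isUnit_det : IsUnit ((partitionIndicator g R)ᵀ * partitionIndicator g R).det := by
    rw [transpose_partitionIndicator_mul_self, Matrix.det_diagonal, isUnit_iff_ne_zero]
    exact Finset.prod_ne_zero_iff.mpr fun r _ =>
      Nat.cast_ne_zero.mpr (group_nonempty r).card_ne_zero
  rw [Matrix.mul_assoc, Matrix.nonsing_inv_mul _ isUnit_det]

theorem exists_eq_partitionIndicator_mul_iff [NonAssocSemiring R] [Fintype κ]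
    {M : Matrix ι μ R} :
    (∃ X : Matrix κ μ R, M = partitionIndicator g R * X) ↔ M.row.FactorsThrough g := by
  simp only [partitionIndicator_mul]
  constructor
  · rintro ⟨X, rfl⟩ i i' hii'
    ext s
    simp [hii']
  · intro hM
    refine ⟨Matrix.of (Function.extend g M.row 0), ?_⟩
    ext i s
    exact (congrFun (hM.extend_apply 0 i) s).symm

end Indicator

theorem eq_mul_leftInverse_mul_iff_exists_eq_mul {ι κ μ R : Type*} [Semiring R] [Fintype ι]
    [Fintype κ] [DecidableEq κ] {H : Matrix ι κ R} {G : Matrix κ ι R} (hG : G * H = 1)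
    {M : Matrix ι μ R} :
    M = H * (G * M) ↔ ∃ X : Matrix κ μ R, M = H * X := by
  refine ⟨fun h => ⟨G * M, h⟩, ?_⟩
  rintro ⟨X, rfl⟩
  rw [← Matrix.mul_assoc G, hG, Matrix.one_mul]

section Laplacian

variable {ι κ R : Type*} [Fintype ι] [DecidableEq κ]

/-- The total weight `∑_{j : g j = s} A i j` from the node `i` to the group `s`, for the weighted
adjacency matrix `A`. -/
def weightToGroup [AddCommMonoid R] (g : ι → κ) (A : Matrix ι ι R) (i : ι) (s : κ) : R :=
  ∑ j with g j = s, A i j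

/-- The partition into the fibres of `g` is externally equitable for the weights `A`: nodes of the
same group have the same weight to every other group, the weight inside a group being free. -/
def IsExternallyEquitable [AddCommMonoid R] (g : ι → κ) (A : Matrix ι ι R) : Prop :=
  ∀ r s : κ, r ≠ s → ∀ i i' : ι, g i = r → g i' = r →
    weightToGroup g A i s = weightToGroup g A i' s

/-- The combinatorial Laplacian `diag(A·1) − A`, with `diag(A·1)` formed from the row sums also when
`A` is not symmetric. -/
def weightedLaplacian [AddCommGroup R] [DecidableEq ι] (A : Matrix ι ι R) : Matrix ι ι R :=
  Matrix.diagonal (fun i => ∑ j, A i j) - A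

variable [DecidableEq ι] [NonAssocRing R] (g : ι → κ) (A : Matrix ι ι R)

theorem weightedLaplacian_mul_partitionIndicator_apply (i : ι) (s : κ) :
    (weightedLaplacian A * partitionIndicator g R) i s
      = (if g i = s then ∑ j, A i j else 0) - weightToGroup g A i s := by
  rw [weightedLaplacian, Matrix.sub_mul, Matrix.sub_apply, Matrix.diagonal_mul,
    mul_partitionIndicator_apply, partitionIndicator_apply, mul_ite, mul_one, mul_zero,
    weightToGroup]

theorem weightedLaplacian_mul_partitionIndicator_apply_of_ne {i : ι} {s : κ} (his : g i ≠ s) :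
    (weightedLaplacian A * partitionIndicator g R) i s = -weightToGroup g A i s := by
  rw [weightedLaplacian_mul_partitionIndicator_apply, if_neg his, zero_sub]

theorem weightedLaplacian_mul_partitionIndicator_apply_self [Fintype κ] (i : ι) :
    (weightedLaplacian A * partitionIndicator g R) i (g i)
      = ∑ s ∈ Finset.univ.erase (g i), weightToGroup g A i s := by
  have sum_weightToGroup : ∑ s, weightToGroup g A i s = ∑ j, A i j :=
    Finset.sum_fiberwise Finset.univ g (A i)
  rw [weightedLaplacian_mul_partitionIndicator_apply, if_pos rfl, ← sum_weightToGroup,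
    Finset.sum_erase_eq_sub (Finset.mem_univ _)]

theorem row_weightedLaplacian_mul_partitionIndicator_factorsThrough_iff [Finite κ] :
    (weightedLaplacian A * partitionIndicator g R).row.FactorsThrough g
      ↔ IsExternallyEquitable g A := by
  have := Fintype.ofFinite κ
  constructor
  · rintro h r s hrs i i' rfl hi'
    have entries_eq := congrFun (h hi'.symm) s
    simpa only [Matrix.row_apply, neg_inj,
      weightedLaplacian_mul_partitionIndicator_apply_of_ne g A hrs,
      weightedLaplacian_mul_partitionIndicator_apply_of_ne g A (hi'.trans_ne hrs)]
      using entries_eq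
  · intro h i i' hii'
    ext s
    simp only [Matrix.row_apply]
    by_cases his : g i = s
    · subst his
      rw [weightedLaplacian_mul_partitionIndicator_apply_self, hii',
        weightedLaplacian_mul_partitionIndicator_apply_self]
      exact Finset.sum_congr rfl fun t ht =>
        h (g i') t (Finset.ne_of_mem_erase ht).symm i i' hii' rfl
    · rw [weightedLaplacian_mul_partitionIndicator_apply_of_ne g A his,
        weightedLaplacian_mul_partitionIndicator_apply_of_ne g A (hii' ▸ his),
        h (g i) s his i i' rfl hii'.symm]

end Laplacian

theorem EEP_iff_equal_external_weights_general {ι κ R : Type*} [Fintype ι] [DecidableEq ι]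
    [Fintype κ] [DecidableEq κ] [Ring R] (g : ι → κ) {G : Matrix κ ι R}
    (hG : G * partitionIndicator g R = 1) (A : Matrix ι ι R) :
    weightedLaplacian A * partitionIndicator g R
        = partitionIndicator g R * (G * weightedLaplacian A * partitionIndicator g R)
      ↔ IsExternallyEquitable g A := by
  rw [Matrix.mul_assoc G, eq_mul_leftInverse_mul_iff_exists_eq_mul hG,
    exists_eq_partitionIndicator_mul_iff,
    row_weightedLaplacian_mul_partitionIndicator_factorsThrough_iff]

/-- The algebraic condition `L H = H L^π` (with `L = diag(A·1) − A` and
`L^π = H† L H`) holds if and only if for every pair of distinct groups `r ≠ s`, all nodes in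
group `r` have the same total edge weight to group `s`: the partition is externally equitable. -/
theorem EEP_iff_equal_external_weights
    {n k : ℕ} (g : Fin n → Fin k) (hg : Function.Surjective g)
    (H : Matrix (Fin n) (Fin k) ℝ)
    (hH : H = Matrix.of fun i j => if g i = j then (1 : ℝ) else 0)
    (Hdag : Matrix (Fin k) (Fin n) ℝ) (hHdag : Hdag = (Hᵀ * H)⁻¹ * Hᵀ)
    (A : Matrix (Fin n) (Fin n) ℝ) (hAsymm : A.IsSymm) (hAnn : ∀ i j, 0 ≤ A i j)
    (L : Matrix (Fin n) (Fin n) ℝ)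
    (hL : L = Matrix.diagonal (fun i => ∑ j, A i j) - A) :
    L * H = H * (Hdag * L * H)
      ↔ ∀ r s : Fin k, r ≠ s → ∀ i i' : Fin n, g i = r → g i' = r →
          ∑ j ∈ Finset.univ.filter (fun j => g j = s), A i j
            = ∑ j ∈ Finset.univ.filter (fun j => g j = s), A i' j := by
  subst hH hHdag hL
  exact EEP_iff_equal_external_weights_general g (pinv_partitionIndicator_mul_self hg) A
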